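/- Let $-1 < \alpha < \infty$, $0 < t < \infty$, $\beta = 1 + (n+1+\alpha)/t$, and suppose $M_g: A^t_\alpha \to B^\beta$ is bounded. Then $g$ is a bounded holomorphic function on $\mathbb{B}_n$, i.e., $\sup_{a \in \mathbb{B}_n} |g(a)| < \infty$. -/

import Mathlib

open MeasureTheory

noncomputable section

abbrev Cn (n : ℕ) := EuclideanSpace ℂ (Fin n)


noncomputable instance (n : ℕ) : MeasurableSpace (Cn n) := borel _
instance (n : ℕ) : BorelSpace (Cn n) := ⟨rfl⟩
noncomputable instance (n : ℕ) : MeasureSpace (Cn n) := ⟨MeasureTheory.Measure.addHaar⟩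

def B (n : ℕ) : Set (Cn n) := Metric.ball 0 1

def bdot {n : ℕ} (z w : Cn n) : ℂ := ∑ j, z j * (starRingEnd ℂ) (w j)

def vol (n : ℕ) (α : ℝ) : Measure (Cn n) :=
  (volume.restrict (B n)).withDensity fun z => ENNReal.ofReal ((1 - ‖z‖ ^ 2) ^ α)

def Hol {n : ℕ} (f : Cn n → ℂ) : Prop := DifferentiableOn ℂ f (B n)

def bNorm (n : ℕ) (p α : ℝ) (f : Cn n → ℂ) : ℝ :=
  (∫ z, ‖f z‖ ^ p ∂(vol n α)) ^ (1 / p)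

def InBergman (n : ℕ) (p α : ℝ) (f : Cn n → ℂ) : Prop :=
  Hol f ∧ Integrable (fun z => ‖f z‖ ^ p) (vol n α)

def rderiv {n : ℕ} (f : Cn n → ℂ) (z : Cn n) : ℂ := fderiv ℂ f z z

def mob {n : ℕ} (a z : Cn n) : ℝ :=
  (1 - ‖a‖ ^ 2) * (1 - ‖z‖ ^ 2) / ‖(1 : ℂ) - bdot z a‖ ^ 2

def rho {n : ℕ} (z w : Cn n) : ℝ := Real.sqrt (1 - mob z w)

def bergDist {n : ℕ} (z w : Cn n) : ℝ :=
  (1 / 2) * Real.log ((1 + rho z w) / (1 - rho z w))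

def bergBall {n : ℕ} (a : Cn n) (r : ℝ) : Set (Cn n) := {w ∈ B n | bergDist a w < r}

def IsCarleson (n : ℕ) (lam γ : ℝ) (μ : Measure (Cn n)) : Prop :=
  ∀ p q : ℝ, 0 < p → 0 < q → q / p = lam →
    ∃ C > 0, ∀ f : Cn n → ℂ, InBergman n p γ f →
      ∫ z, ‖f z‖ ^ q ∂μ ≤ C * bNorm n p γ f ^ q

def blochSet (n : ℕ) (α : ℝ) (f : Cn n → ℂ) : Set ℝ :=
  {x | ∃ z ∈ B n, x = ‖rderiv f z‖ * (1 - ‖z‖ ^ 2) ^ α}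

def blochNorm (n : ℕ) (α : ℝ) (f : Cn n → ℂ) : ℝ := sSup (blochSet n α f)

def InBloch (n : ℕ) (α : ℝ) (f : Cn n → ℂ) : Prop :=
  Hol f ∧ BddAbove (blochSet n α f)

def Fint (n : ℕ) (p q s : ℝ) (f : Cn n → ℂ) (a : Cn n) : ℝ :=
  ∫ z in B n, ‖rderiv f z‖ ^ p * (1 - ‖z‖ ^ 2) ^ q * mob a z ^ s

def FSet (n : ℕ) (p q s : ℝ) (f : Cn n → ℂ) : Set ℝ :=
  {x | ∃ a ∈ B n, x = Fint n p q s f a}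

def FNorm (n : ℕ) (p q s : ℝ) (f : Cn n → ℂ) : ℝ := sSup (FSet n p q s f) ^ (1 / p)

def InF (n : ℕ) (p q s : ℝ) (f : Cn n → ℂ) : Prop :=
  Hol f ∧ BddAbove (FSet n p q s f)

def toeplitz (n : ℕ) (β : ℝ) (μ : Measure (Cn n)) (f : Cn n → ℂ) (z : Cn n) : ℂ :=
  ∫ w, f w / ((1 : ℂ) - bdot z w) ^ ((((n : ℝ) + 1 + β : ℝ)) : ℂ) ∂μ

def carlSet (n : ℕ) (p q γ : ℝ) (μ : Measure (Cn n)) : Set ℝ :=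
  {x | ∃ f : Cn n → ℂ, InBergman n p γ f ∧ bNorm n p γ f ≤ 1 ∧ x = ∫ z, ‖f z‖ ^ q ∂μ}

/-!
For `a` in the ball let `P_a z = (1 - ‖a‖²) / (1 - ⟪a, z⟫)`, so that `P_a a = 1` and `‖P_a‖ ≤ 2`.
Integrating the weight against `‖P_a‖ ^ (2 (n + 1 + α))` and substituting `z = φ_a w`, with `φ_a`
the automorphism of the ball exchanging `0` and `a`, gives exactly `(1 - ‖a‖²) ^ (n + 1 + α)` times
the total mass, because `‖P_a‖² / (1 - ‖a‖²)` is the factor in both `1 - ‖φ_a z‖²` and the Jacobian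
of `φ_a`. Hence `‖P_a ^ k‖ = O((1 - ‖a‖²) ^ ((n + 1 + α) / t))` in the Bergman space for large `k`,
and the hypothesis bounds `(1 - ‖a‖²) R(g P_a ^ k)(a) = (1 - ‖a‖²) Rg(a) + k g(a) ‖a‖²` uniformly
in `a`. Subtracting this for two consecutive `k` eliminates the unknown `Rg(a)` and bounds
`g(a) ‖a‖²`; near the origin `g` is bounded by compactness.
-/

section BallAutomorphism

open Metric Module
open scoped InnerProductSpace

variable {E : Type*} [NormedAddCommGroup E]

lemma one_sub_norm_sq_pos {a : E} (ha : ‖a‖ < 1) : 0 < 1 - ‖a‖ ^ 2 := by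
  nlinarith [norm_nonneg a]

/-- The number `s_a = √(1 - ‖a‖²)` entering the automorphism `φ_a` of the unit ball. -/
def ballDefect (a : E) : ℝ := √(1 - ‖a‖ ^ 2)

lemma ballDefect_nonneg (a : E) : 0 ≤ ballDefect a := Real.sqrt_nonneg _

lemma ballDefect_pos {a : E} (ha : ‖a‖ < 1) : 0 < ballDefect a :=
  Real.sqrt_pos.2 (one_sub_norm_sq_pos ha)

lemma ballDefect_sq {a : E} (ha : ‖a‖ < 1) : ballDefect a ^ 2 = 1 - ‖a‖ ^ 2 :=
  Real.sq_sqrt (one_sub_norm_sq_pos ha).le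

lemma one_add_ballDefect_ne_zero (a : E) : (1 + ballDefect a : ℂ) ≠ 0 := by
  have := ballDefect_nonneg a
  exact_mod_cast (by positivity : 1 + ballDefect a ≠ 0)

variable [InnerProductSpace ℂ E]

/-- The normalized kernel `z ↦ (1 - ‖a‖²) / (1 - ⟪a, z⟫)` of the unit ball: a bounded holomorphic
function taking the value `1` at `a` and decaying away from `a` when `a` is near the sphere. -/
def ballPeak (a z : E) : ℂ := ((1 - ‖a‖ ^ 2 : ℝ) : ℂ) / (1 - ⟪a, z⟫_ℂ)

/-- The involutive automorphism `φ_a(z) = (a - P z - s Q z) / (1 - ⟪a, z⟫)` of the unit ball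
exchanging `0` and `a`, where `s = ballDefect a`, `P` is the projection onto `ℂ a` and `Q = 1 - P`.
Since `P z = (⟪a, z⟫ / ‖a‖²) a` and `(1 - s) / ‖a‖² = 1 / (1 + s)`, one can avoid the division
by `‖a‖` and so include the case `a = 0`. -/
def ballInvolution (a z : E) : E :=
  (1 - ⟪a, z⟫_ℂ)⁻¹ • ((1 - ⟪a, z⟫_ℂ / (1 + ballDefect a)) • a - (ballDefect a : ℂ) • z)

variable {a z : E}

lemma one_sub_norm_le_norm_one_sub_inner (hz : ‖z‖ ≤ 1) : 1 - ‖a‖ ≤ ‖1 - ⟪a, z⟫_ℂ‖ := by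
  have h_tri := norm_sub_norm_le 1 ⟪a, z⟫_ℂ
  have h_cs := norm_inner_le_norm (𝕜 := ℂ) a z
  rw [norm_one] at h_tri
  nlinarith [norm_nonneg a]

lemma one_sub_inner_ne_zero (ha : ‖a‖ < 1) (hz : ‖z‖ ≤ 1) : 1 - ⟪a, z⟫_ℂ ≠ 0 :=
  norm_pos_iff.1 ((sub_pos.2 ha).trans_le (one_sub_norm_le_norm_one_sub_inner hz))

lemma one_sub_inner_self (a : E) : 1 - ⟪a, a⟫_ℂ = ((1 - ‖a‖ ^ 2 : ℝ) : ℂ) := by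
  simp [inner_self_eq_norm_sq_to_K]

lemma inner_self_eq_one_sub_ballDefect_sq (ha : ‖a‖ < 1) :
    ⟪a, a⟫_ℂ = 1 - (ballDefect a : ℂ) ^ 2 := by
  rw [← Complex.ofReal_pow, ballDefect_sq ha, ← one_sub_inner_self, sub_sub_cancel]

lemma ballPeak_self (ha : ‖a‖ < 1) : ballPeak a a = 1 := by
  rw [ballPeak, one_sub_inner_self, div_self]
  exact_mod_cast (one_sub_norm_sq_pos ha).ne'

lemma norm_ballPeak (ha : ‖a‖ < 1) (z : E) :
    ‖ballPeak a z‖ = (1 - ‖a‖ ^ 2) / ‖1 - ⟪a, z⟫_ℂ‖ := by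
  rw [ballPeak, norm_div, Complex.norm_real, Real.norm_of_nonneg (one_sub_norm_sq_pos ha).le]

lemma norm_ballPeak_pos (ha : ‖a‖ < 1) (hz : ‖z‖ ≤ 1) : 0 < ‖ballPeak a z‖ := by
  rw [norm_ballPeak ha]
  exact div_pos (one_sub_norm_sq_pos ha) (norm_pos_iff.2 (one_sub_inner_ne_zero ha hz))

lemma norm_ballPeak_le_two (ha : ‖a‖ < 1) (hz : ‖z‖ ≤ 1) : ‖ballPeak a z‖ ≤ 2 := by
  have h_le := one_sub_norm_le_norm_one_sub_inner (a := a) hz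
  rw [norm_ballPeak ha, div_le_iff₀ ((sub_pos.2 ha).trans_le h_le)]
  nlinarith [norm_nonneg a]

lemma hasFDerivAt_ballPeak (ha : ‖a‖ < 1) (hz : ‖z‖ ≤ 1) :
    HasFDerivAt (ballPeak a) ((ballPeak a z / (1 - ⟪a, z⟫_ℂ)) • innerSL ℂ a) z := by
  have hD := one_sub_inner_ne_zero ha hz
  have h_div : HasDerivAt (fun u : ℂ ↦ ((1 - ‖a‖ ^ 2 : ℝ) : ℂ) / (1 - u))
      (ballPeak a z / (1 - ⟪a, z⟫_ℂ)) ⟪a, z⟫_ℂ := by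
    refine ((hasDerivAt_const _ ((1 - ‖a‖ ^ 2 : ℝ) : ℂ)).div
      ((hasDerivAt_id ⟪a, z⟫_ℂ).const_sub 1) hD).congr_deriv ?_
    simp only [ballPeak, id_eq]
    field_simp
    ring
  exact h_div.comp_hasFDerivAt z (innerSL ℂ a).hasFDerivAt

lemma one_sub_inner_ballInvolution (ha : ‖a‖ < 1) (hz : ‖z‖ ≤ 1) :
    1 - ⟪a, ballInvolution a z⟫_ℂ = ballPeak a z := by
  have hD := one_sub_inner_ne_zero ha hz
  have hs1 := one_add_ballDefect_ne_zero a
  rw [ballInvolution, ballPeak, inner_smul_right, inner_sub_right, inner_smul_right,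
    inner_smul_right, inner_self_eq_one_sub_ballDefect_sq ha, ← ballDefect_sq ha,
    Complex.ofReal_pow]
  field_simp
  ring

lemma norm_ballInvolution_numerator_sq (ha : ‖a‖ < 1) (z : E) :
    ‖(1 - ⟪a, z⟫_ℂ / (1 + ballDefect a)) • a - (ballDefect a : ℂ) • z‖ ^ 2 =
      ‖1 - ⟪a, z⟫_ℂ‖ ^ 2 - (1 - ‖a‖ ^ 2) * (1 - ‖z‖ ^ 2) := by
  have hs1 : 1 + ballDefect a ≠ 0 := by exact_mod_cast one_add_ballDefect_ne_zero a
  have ha2 : ‖a‖ ^ 2 = 1 - ballDefect a ^ 2 := by rw [ballDefect_sq ha, sub_sub_cancel]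
  have h_cast : (1 + ballDefect a : ℂ) = ((1 + ballDefect a : ℝ) : ℂ) := by push_cast; rfl
  rw [norm_sub_sq (𝕜 := ℂ), inner_smul_left, inner_smul_right, norm_smul, norm_smul, mul_pow,
    mul_pow, Complex.norm_real, Real.norm_eq_abs, sq_abs, Complex.sq_norm, Complex.sq_norm, ha2,
    h_cast]
  simp only [Complex.normSq_apply, Complex.sub_re, Complex.sub_im, Complex.one_re,
    Complex.one_im, Complex.div_ofReal_re, Complex.div_ofReal_im, RCLike.re_to_complex,
    Complex.mul_re, Complex.mul_im, Complex.conj_re, Complex.conj_im, Complex.ofReal_re,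
    Complex.ofReal_im]
  field_simp
  ring

lemma one_sub_norm_ballInvolution_sq (ha : ‖a‖ < 1) (hz : ‖z‖ ≤ 1) :
    1 - ‖ballInvolution a z‖ ^ 2 =
      ‖ballPeak a z‖ ^ 2 / (1 - ‖a‖ ^ 2) * (1 - ‖z‖ ^ 2) := by
  have hD := norm_pos_iff.2 (one_sub_inner_ne_zero ha hz)
  rw [ballInvolution, norm_smul, norm_inv, mul_pow, norm_ballInvolution_numerator_sq ha,
    norm_ballPeak ha]
  field_simp
  ring

lemma norm_ballInvolution_lt_one (ha : ‖a‖ < 1) (hz : ‖z‖ < 1) : ‖ballInvolution a z‖ < 1 := by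
  have h_pos : 0 < 1 - ‖ballInvolution a z‖ ^ 2 := by
    rw [one_sub_norm_ballInvolution_sq ha hz.le]
    have := norm_ballPeak_pos ha hz.le
    exact mul_pos (div_pos (by positivity) (one_sub_norm_sq_pos ha)) (one_sub_norm_sq_pos hz)
  nlinarith [norm_nonneg (ballInvolution a z)]

lemma ballInvolution_ballInvolution (ha : ‖a‖ < 1) (hz : ‖z‖ ≤ 1) :
    ballInvolution a (ballInvolution a z) = z := by
  have hD := one_sub_inner_ne_zero ha hz
  have hs : (ballDefect a : ℂ) ≠ 0 := by exact_mod_cast (ballDefect_pos ha).ne'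
  have hs1 := one_add_ballDefect_ne_zero a
  have h_inner := one_sub_inner_ballInvolution ha hz
  rw [ballInvolution, h_inner, ← sub_sub_cancel 1 ⟪a, ballInvolution a z⟫_ℂ, h_inner, ballPeak,
    ← ballDefect_sq ha, Complex.ofReal_pow, ballInvolution]
  match_scalars <;> field_simp
  ring

lemma image_ballInvolution_ball (ha : ‖a‖ < 1) :
    ballInvolution a '' ball 0 1 = ball 0 1 := by
  have h_maps : Set.MapsTo (ballInvolution a) (ball 0 1) (ball 0 1) := fun z hz ↦
    mem_ball_zero_iff.2 (norm_ballInvolution_lt_one ha (mem_ball_zero_iff.1 hz))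
  have h_inv : Set.LeftInvOn (ballInvolution a) (ballInvolution a) (ball 0 1) := fun z hz ↦
    ballInvolution_ballInvolution ha (mem_ball_zero_iff.1 hz).le
  exact h_maps.image_subset.antisymm fun z hz ↦ ⟨_, h_maps hz, h_inv hz⟩

lemma injOn_ballInvolution (ha : ‖a‖ < 1) : Set.InjOn (ballInvolution a) (closedBall 0 1) :=
  Set.LeftInvOn.injOn fun _ hz ↦ ballInvolution_ballInvolution ha (mem_closedBall_zero_iff.1 hz)

lemma hasFDerivAt_ballInvolution (ha : ‖a‖ < 1) (hz : ‖z‖ ≤ 1) :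
    HasFDerivAt (ballInvolution a)
      (-(ballDefect a / (1 - ⟪a, z⟫_ℂ)) • (ContinuousLinearMap.id ℂ E +
        (innerSL ℂ a).smulRight ((ballDefect a : ℂ)⁻¹ •
          ((1 + ballDefect a : ℂ)⁻¹ • a - ballInvolution a z)))) z := by
  have hD := one_sub_inner_ne_zero ha hz
  have hs : (ballDefect a : ℂ) ≠ 0 := by exact_mod_cast (ballDefect_pos ha).ne'
  have h_inner : HasFDerivAt (fun w ↦ ⟪a, w⟫_ℂ) (innerSL ℂ a) z := (innerSL ℂ a).hasFDerivAt
  have h_inv := (hasDerivAt_inv hD).comp_hasFDerivAt z (h_inner.const_sub 1)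
  have h_num := (((h_inner.mul_const (1 + ballDefect a : ℂ)⁻¹).const_sub 1).smul_const a).sub
    ((hasFDerivAt_id z).const_smul (ballDefect a : ℂ))
  refine (h_inv.smul h_num).congr_fderiv (ContinuousLinearMap.ext fun h ↦ ?_)
  simp only [ballInvolution, Function.comp_apply, smul_neg, neg_smul, neg_neg, Pi.sub_apply,
    Pi.smul_apply, id_eq, add_apply, smul_apply, sub_apply, neg_apply, coe_innerSL_apply,
    ContinuousLinearMap.smulRight_apply, ContinuousLinearMap.id_apply, smul_eq_mul]
  match_scalars <;> field_simp
  ring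

lemma det_fderiv_ballInvolution [FiniteDimensional ℂ E] (ha : ‖a‖ < 1) (hz : ‖z‖ ≤ 1) :
    (fderiv ℂ (ballInvolution a) z).det =
      (-(ballDefect a / (1 - ⟪a, z⟫_ℂ))) ^ finrank ℂ E * (ballPeak a z / ballDefect a) := by
  have hs : (ballDefect a : ℂ) ≠ 0 := by exact_mod_cast (ballDefect_pos ha).ne'
  have hs1 := one_add_ballDefect_ne_zero a
  set v := (ballDefect a : ℂ)⁻¹ • ((1 + ballDefect a : ℂ)⁻¹ • a - ballInvolution a z) with hv
  have h_transvection : (fderiv ℂ (ballInvolution a) z : E →ₗ[ℂ] E) =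
      (-(ballDefect a / (1 - ⟪a, z⟫_ℂ))) • LinearMap.transvection (innerₛₗ ℂ a) v := by
    rw [(hasFDerivAt_ballInvolution ha hz).fderiv]
    rfl
  have h_rank_one : 1 + ⟪a, v⟫_ℂ = ballPeak a z / ballDefect a := by
    rw [← one_sub_inner_ballInvolution ha hz, hv, inner_smul_right, inner_sub_right,
      inner_smul_right, inner_self_eq_one_sub_ballDefect_sq ha]
    field_simp
    ring
  rw [ContinuousLinearMap.det, h_transvection, LinearMap.det_smul, LinearMap.transvection.det,
    innerₛₗ_apply_apply, h_rank_one]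

lemma norm_det_fderiv_ballInvolution_sq [FiniteDimensional ℂ E] (ha : ‖a‖ < 1) (hz : ‖z‖ ≤ 1) :
    ‖(fderiv ℂ (ballInvolution a) z).det‖ ^ 2 =
      (‖ballPeak a z‖ ^ 2 / (1 - ‖a‖ ^ 2)) ^ (finrank ℂ E + 1) := by
  have hs := ballDefect_pos ha
  have h_scale : (ballDefect a / ‖1 - ⟪a, z⟫_ℂ‖) ^ 2 = ‖ballPeak a z‖ ^ 2 / ballDefect a ^ 2 := by
    rw [norm_ballPeak ha, ← ballDefect_sq ha]
    field_simp
  rw [det_fderiv_ballInvolution ha hz, norm_mul, norm_pow, norm_neg, norm_div, norm_div,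
    Complex.norm_real, Real.norm_of_nonneg hs.le, mul_pow, pow_right_comm, h_scale,
    div_pow ‖ballPeak a z‖, ← pow_succ, ballDefect_sq ha]

end BallAutomorphism

section ChangeOfVariables

open Metric Module

lemma abs_det_restrictScalars_real {E : Type*} [NormedAddCommGroup E] [NormedSpace ℂ E]
    (f : E →L[ℂ] E) : |(f.restrictScalars ℝ).det| = ‖f.det‖ ^ 2 := by
  rw [ContinuousLinearMap.det, ContinuousLinearMap.coe_restrictScalars,
    LinearMap.det_restrictScalars, Algebra.norm_complex_apply, Complex.normSq_eq_norm_sq, abs_sq,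
    ContinuousLinearMap.det]

variable {E : Type*} [NormedAddCommGroup E] [InnerProductSpace ℂ E] [FiniteDimensional ℂ E]
  [MeasurableSpace E] [BorelSpace E] (μ : Measure E) [μ.IsAddHaarMeasure] {a : E}

lemma setLIntegral_ball_comp_ballInvolution (ha : ‖a‖ < 1) (F : E → ENNReal) :
    ∫⁻ z in ball 0 1, ENNReal.ofReal
        ((‖ballPeak a z‖ ^ 2 / (1 - ‖a‖ ^ 2)) ^ (finrank ℂ E + 1)) * F (ballInvolution a z) ∂μ =
      ∫⁻ z in ball 0 1, F z ∂μ := by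
  have h_deriv : ∀ z ∈ ball (0 : E) 1, HasFDerivWithinAt (ballInvolution a)
      ((fderiv ℂ (ballInvolution a) z).restrictScalars ℝ) (ball 0 1) z := fun z hz ↦
    ((hasFDerivAt_ballInvolution ha (mem_ball_zero_iff.1 hz).le).differentiableAt.hasFDerivAt
      |>.restrictScalars ℝ).hasFDerivWithinAt
  conv_rhs => rw [← image_ballInvolution_ball ha]
  rw [lintegral_image_eq_lintegral_abs_det_fderiv_mul μ measurableSet_ball h_deriv
    ((injOn_ballInvolution ha).mono ball_subset_closedBall)]
  refine setLIntegral_congr_fun measurableSet_ball fun z hz ↦ ?_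
  simp only [abs_det_restrictScalars_real,
    norm_det_fderiv_ballInvolution_sq ha (mem_ball_zero_iff.1 hz).le]

lemma setLIntegral_ball_weight_mul_ballPeak_rpow (ha : ‖a‖ < 1) (α : ℝ) :
    ∫⁻ z in ball 0 1, ENNReal.ofReal ((1 - ‖z‖ ^ 2) ^ α) *
        ENNReal.ofReal (‖ballPeak a z‖ ^ (2 * (finrank ℂ E + 1 + α))) ∂μ =
      ENNReal.ofReal ((1 - ‖a‖ ^ 2) ^ (finrank ℂ E + 1 + α)) *
        ∫⁻ z in ball 0 1, ENNReal.ofReal ((1 - ‖z‖ ^ 2) ^ α) ∂μ := by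
  have hδ := one_sub_norm_sq_pos ha
  conv_rhs => rw [← setLIntegral_ball_comp_ballInvolution μ ha,
    ← lintegral_const_mul' _ _ ENNReal.ofReal_ne_top]
  refine setLIntegral_congr_fun measurableSet_ball fun z hz ↦ ?_
  have hz := mem_ball_zero_iff.1 hz
  have hP := norm_ballPeak_pos ha hz.le
  have hw := one_sub_norm_sq_pos hz
  have h_jacobian : (‖ballPeak a z‖ ^ 2 / (1 - ‖a‖ ^ 2)) ^ (finrank ℂ E + 1) *
      (‖ballPeak a z‖ ^ 2 / (1 - ‖a‖ ^ 2)) ^ α =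
        ‖ballPeak a z‖ ^ (2 * (finrank ℂ E + 1 + α)) / (1 - ‖a‖ ^ 2) ^ (finrank ℂ E + 1 + α) := by
    rw [← Real.rpow_natCast, ← Real.rpow_add (by positivity), Nat.cast_add_one,
      Real.div_rpow (by positivity) hδ.le, Real.rpow_mul hP.le, Real.rpow_two]
  simp only [one_sub_norm_ballInvolution_sq ha hz.le]
  rw [← ENNReal.ofReal_mul (by positivity), ← ENNReal.ofReal_mul (by positivity),
    ← ENNReal.ofReal_mul (by positivity), Real.mul_rpow (by positivity) hw.le,
    ← mul_assoc (_ ^ (finrank ℂ E + 1)), h_jacobian]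
  congr 1
  field_simp

end ChangeOfVariables

section Weight

open Metric Module

lemma integrableOn_Ioo_pow_mul_one_sub_sq_rpow (k : ℕ) {α : ℝ} (hα : -1 < α) :
    IntegrableOn (fun r : ℝ ↦ r ^ k * (1 - r ^ 2) ^ α) (Set.Ioo 0 1) := by
  have h_singular : IntegrableOn (fun r : ℝ ↦ (1 - r) ^ α) (Set.Icc 0 1) := by
    have h_reflected :=
      (intervalIntegral.intervalIntegrable_rpow' (a := 0) (b := 1) hα).comp_sub_left 1
    rw [integrableOn_Icc_iff_integrableOn_Ioc,
      ← intervalIntegrable_iff_integrableOn_Ioc_of_le zero_le_one]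
    simpa only [sub_zero, sub_self] using h_reflected.symm
  have h_regular : ContinuousOn (fun r : ℝ ↦ r ^ k * (1 + r) ^ α) (Set.Icc 0 1) :=
    ContinuousOn.mul (by fun_prop) (ContinuousOn.rpow_const (by fun_prop)
      fun r hr ↦ Or.inl (by linarith [hr.1]))
  refine ((h_singular.continuousOn_mul h_regular isCompact_Icc).mono_set
    Set.Ioo_subset_Icc_self).congr_fun (fun r hr ↦ ?_) measurableSet_Ioo
  dsimp only
  rw [mul_assoc, ← Real.mul_rpow (by linarith [hr.1]) (by linarith [hr.2])]
  ring_nf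

lemma integrableOn_ball_one_sub_norm_sq_rpow {E : Type*} [NormedAddCommGroup E]
    [NormedSpace ℝ E] [FiniteDimensional ℝ E] [MeasurableSpace E] [BorelSpace E] (μ : Measure E)
    [μ.IsAddHaarMeasure] {α : ℝ} (hα : -1 < α) :
    IntegrableOn (fun z ↦ (1 - ‖z‖ ^ 2) ^ α) (ball 0 1) μ := by
  rcases subsingleton_or_nontrivial E with _ | _
  · have h_const : (fun z : E ↦ (1 - ‖z‖ ^ 2) ^ α) = fun _ ↦ 1 := by
      ext z
      simp [Subsingleton.elim z 0]
    rw [h_const]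
    exact integrableOn_const measure_ball_lt_top.ne
  have h_radial : IntegrableOn (fun r : ℝ ↦ r ^ (finrank ℝ E - 1) •
      (Set.Iio (1 : ℝ)).indicator (fun r ↦ (1 - r ^ 2) ^ α) r) (Set.Ioi 0) := by
    have h_Ioo := integrableOn_Ioo_pow_mul_one_sub_sq_rpow (finrank ℝ E - 1) hα
    rw [← Set.Iio_inter_Ioi, IntegrableOn, ← Measure.restrict_restrict measurableSet_Iio] at h_Ioo
    refine ((integrable_indicator_iff measurableSet_Iio).2 h_Ioo).congr (.of_forall fun r ↦ ?_)
    simp only [Set.indicator_apply, smul_eq_mul, mul_ite, mul_zero]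
  refine (integrable_indicator_iff measurableSet_ball).1
    (((integrable_fun_norm_addHaar μ).2 h_radial).congr (.of_forall fun z ↦ ?_))
  dsimp only
  by_cases hz : ‖z‖ < 1
  · rw [Set.indicator_of_mem (Set.mem_Iio.2 hz), Set.indicator_of_mem (mem_ball_zero_iff.2 hz)]
  · rw [Set.indicator_of_notMem (mt Set.mem_Iio.1 hz),
      Set.indicator_of_notMem (mt mem_ball_zero_iff.1 hz)]

end Weight

section Bergman

open Metric

variable {n : ℕ} {t α : ℝ} {a z : Cn n} {f : Cn n → ℂ}

instance isAddHaarMeasure_volume_Cn (n : ℕ) : (volume : Measure (Cn n)).IsAddHaarMeasure :=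
  inferInstanceAs (Measure.IsAddHaarMeasure Measure.addHaar)

lemma mem_B_iff : z ∈ B n ↔ ‖z‖ < 1 := mem_ball_zero_iff

lemma lintegral_vol (n : ℕ) (α : ℝ) (F : Cn n → ENNReal) :
    ∫⁻ z, F z ∂(vol n α) = ∫⁻ z in ball 0 1, ENNReal.ofReal ((1 - ‖z‖ ^ 2) ^ α) * F z :=
  lintegral_withDensity_eq_lintegral_mul_non_measurable _ (by fun_prop)
    (.of_forall fun _ ↦ ENNReal.ofReal_lt_top) F

lemma isFiniteMeasure_vol (n : ℕ) (hα : -1 < α) : IsFiniteMeasure (vol n α) :=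
  isFiniteMeasure_withDensity_ofReal (integrableOn_ball_one_sub_norm_sq_rpow volume hα).2

lemma vol_univ (n : ℕ) (α : ℝ) :
    vol n α Set.univ = ∫⁻ z in ball (0 : Cn n) 1, ENNReal.ofReal ((1 - ‖z‖ ^ 2) ^ α) := by
  rw [← lintegral_one, lintegral_vol]
  simp only [mul_one]

lemma lintegral_ballPeak_rpow (ha : ‖a‖ < 1) (α : ℝ) :
    ∫⁻ z, ENNReal.ofReal (‖ballPeak a z‖ ^ (2 * (n + 1 + α))) ∂(vol n α) =
      ENNReal.ofReal ((1 - ‖a‖ ^ 2) ^ (n + 1 + α)) * vol n α Set.univ := by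
  have h := setLIntegral_ball_weight_mul_ballPeak_rpow volume ha α
  rwa [finrank_euclideanSpace_fin, ← lintegral_vol, ← vol_univ] at h

lemma ae_vol_mem_B (n : ℕ) (α : ℝ) : ∀ᵐ z ∂(vol n α), z ∈ B n :=
  (withDensity_absolutelyContinuous _ _).ae_le (ae_restrict_mem measurableSet_ball)

lemma Hol.inBergman_of_lintegral_lt_top (hf : Hol f) (ht : 0 ≤ t)
    (h : ∫⁻ z, ENNReal.ofReal (‖f z‖ ^ t) ∂(vol n α) < ⊤) : InBergman n t α f := by
  have h_cont : ContinuousOn (fun z ↦ ‖f z‖ ^ t) (B n) :=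
    hf.continuousOn.norm.rpow_const fun _ _ ↦ Or.inr ht
  refine ⟨hf, (h_cont.aestronglyMeasurable measurableSet_ball).mono_ac
    (withDensity_absolutelyContinuous _ _), ?_⟩
  rwa [hasFiniteIntegral_iff_ofReal (.of_forall fun z ↦ by positivity)]

lemma InBergman.bNorm_le {M : ℝ} (hf : InBergman n t α f) (ht : 0 ≤ t) (hM : 0 ≤ M)
    (h : ∫⁻ z, ENNReal.ofReal (‖f z‖ ^ t) ∂(vol n α) ≤ ENNReal.ofReal M) :
    bNorm n t α f ≤ M ^ (1 / t) := by
  rw [← ofReal_integral_eq_lintegral_ofReal hf.2 (.of_forall fun z ↦ by positivity),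
    ENNReal.ofReal_le_ofReal_iff hM] at h
  exact Real.rpow_le_rpow (by positivity) h (by positivity)

lemma hol_ballPeak_pow (ha : ‖a‖ < 1) (k : ℕ) : Hol fun z ↦ ballPeak a z ^ k := fun _ hz ↦
  ((hasFDerivAt_ballPeak ha (mem_B_iff.1 hz).le).differentiableAt.pow k).differentiableWithinAt

lemma lintegral_norm_ballPeak_pow_rpow_le {k : ℕ} (hk : 2 * (n + 1 + α) ≤ k * t) (ha : ‖a‖ < 1) :
    ∫⁻ z, ENNReal.ofReal (‖ballPeak a z ^ k‖ ^ t) ∂(vol n α) ≤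
      ENNReal.ofReal (2 ^ (k * t - 2 * (n + 1 + α)) * (1 - ‖a‖ ^ 2) ^ (n + 1 + α)) *
        vol n α Set.univ := by
  have h_pointwise : ∀ z ∈ B n, ‖ballPeak a z ^ k‖ ^ t ≤
      2 ^ (k * t - 2 * (n + 1 + α)) * ‖ballPeak a z‖ ^ (2 * (n + 1 + α)) := by
    intro z hz
    have hP := norm_ballPeak_pos ha (mem_B_iff.1 hz).le
    rw [norm_pow, ← Real.rpow_natCast, ← Real.rpow_mul hP.le,
      ← sub_add_cancel (k * t) (2 * (n + 1 + α)), Real.rpow_add hP, sub_add_cancel]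
    gcongr
    exact norm_ballPeak_le_two ha (mem_B_iff.1 hz).le
  calc ∫⁻ z, ENNReal.ofReal (‖ballPeak a z ^ k‖ ^ t) ∂(vol n α)
      ≤ ∫⁻ z, ENNReal.ofReal (2 ^ (k * t - 2 * (n + 1 + α))) *
          ENNReal.ofReal (‖ballPeak a z‖ ^ (2 * (n + 1 + α))) ∂(vol n α) := by
        refine lintegral_mono_ae ((ae_vol_mem_B n α).mono fun z hz ↦ ?_)
        rw [← ENNReal.ofReal_mul (by positivity)]
        exact ENNReal.ofReal_le_ofReal (h_pointwise z hz)
    _ = _ := by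
        rw [lintegral_const_mul' _ _ ENNReal.ofReal_ne_top, lintegral_ballPeak_rpow ha,
          ← mul_assoc, ENNReal.ofReal_mul (by positivity)]

lemma exists_bNorm_ballPeak_pow_le (n : ℕ) {k : ℕ} (ht : 0 < t) (hα : -1 < α)
    (hk : 2 * (n + 1 + α) ≤ k * t) :
    ∃ K, ∀ a ∈ B n, InBergman n t α (fun z ↦ ballPeak a z ^ k) ∧
      bNorm n t α (fun z ↦ ballPeak a z ^ k) ≤ K * (1 - ‖a‖ ^ 2) ^ ((n + 1 + α) / t) := by
  have := isFiniteMeasure_vol n hα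
  refine ⟨(2 ^ (k * t - 2 * (n + 1 + α)) * (vol n α).real Set.univ) ^ (1 / t), fun a ha ↦ ?_⟩
  have hδ := one_sub_norm_sq_pos (mem_B_iff.1 ha)
  have h_le := lintegral_norm_ballPeak_pow_rpow_le hk (mem_B_iff.1 ha)
  rw [← ofReal_measureReal, ← ENNReal.ofReal_mul (by positivity)] at h_le
  have h_mem := (hol_ballPeak_pow (mem_B_iff.1 ha) k).inBergman_of_lintegral_lt_top ht.le
    (h_le.trans_lt ENNReal.ofReal_lt_top)
  refine ⟨h_mem, (h_mem.bNorm_le ht.le (by positivity) h_le).trans_eq ?_⟩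
  rw [mul_right_comm, Real.mul_rpow (by positivity) (by positivity), ← Real.rpow_mul hδ.le,
    mul_one_div]

end Bergman

section Bloch

open Metric

variable {n : ℕ} {a : Cn n} {f g : Cn n → ℂ}

lemma InBloch.norm_rderiv_mul_le {β : ℝ} (hf : InBloch n β f) (ha : a ∈ B n) :
    ‖rderiv f a‖ * (1 - ‖a‖ ^ 2) ^ β ≤ blochNorm n β f :=
  le_csSup hf.2 ⟨a, ha, rfl⟩

lemma InBloch.norm_rderiv_mul_le_of_blochNorm_le {γ M : ℝ} (hf : InBloch n (1 + γ) f)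
    (ha : a ∈ B n) (hM : blochNorm n (1 + γ) f ≤ M * (1 - ‖a‖ ^ 2) ^ γ) :
    ‖rderiv f a‖ * (1 - ‖a‖ ^ 2) ≤ M := by
  have hδ := one_sub_norm_sq_pos (mem_B_iff.1 ha)
  have h_le := (hf.norm_rderiv_mul_le ha).trans hM
  rw [Real.rpow_add hδ, Real.rpow_one, ← mul_assoc] at h_le
  exact le_of_mul_le_mul_right h_le (by positivity)

lemma rderiv_mul_ballPeak_pow_self (hg : DifferentiableAt ℂ g a) (ha : ‖a‖ < 1) (k : ℕ) :
    rderiv (fun z ↦ g z * ballPeak a z ^ k) a =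
      rderiv g a + k * (g a * (‖a‖ ^ 2 / (1 - ‖a‖ ^ 2) : ℝ)) := by
  have h_deriv : fderiv ℂ (fun z ↦ g z * ballPeak a z ^ k) a = _ :=
    (hg.hasFDerivAt.mul ((hasFDerivAt_ballPeak ha ha.le).pow k)).fderiv
  simp only [rderiv, h_deriv, ballPeak_self ha, one_sub_inner_self, one_pow, one_smul, add_apply,
    smul_apply, coe_innerSL_apply, smul_eq_mul, nsmul_eq_mul]
  rw [← sub_sub_cancel 1 (inner ℂ a a), one_sub_inner_self]
  push_cast
  ring

lemma norm_mul_norm_sq_le_rderiv_mul_ballPeak_pow (hg : DifferentiableAt ℂ g a) (ha : ‖a‖ < 1)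
    (k : ℕ) :
    ‖g a‖ * ‖a‖ ^ 2 ≤ ‖rderiv (fun z ↦ g z * ballPeak a z ^ (k + 1)) a‖ * (1 - ‖a‖ ^ 2) +
      ‖rderiv (fun z ↦ g z * ballPeak a z ^ k) a‖ * (1 - ‖a‖ ^ 2) := by
  have hδ := one_sub_norm_sq_pos ha
  have h_diff : g a * (‖a‖ ^ 2 / (1 - ‖a‖ ^ 2) : ℝ) =
      rderiv (fun z ↦ g z * ballPeak a z ^ (k + 1)) a -
        rderiv (fun z ↦ g z * ballPeak a z ^ k) a := by
    rw [rderiv_mul_ballPeak_pow_self hg ha, rderiv_mul_ballPeak_pow_self hg ha]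
    push_cast
    ring
  have h_norm := congrArg norm h_diff
  rw [norm_mul, Complex.norm_real, Real.norm_of_nonneg (by positivity), ← mul_div_assoc,
    div_eq_iff hδ.ne'] at h_norm
  rw [h_norm, ← add_mul]
  gcongr
  exact norm_sub_le _ _

lemma exists_norm_le_of_norm_mul_norm_sq_le {E F : Type*} [NormedAddCommGroup E] [ProperSpace E]
    [NormedAddCommGroup F] {g : E → F} {M : ℝ} (hg : ContinuousOn g (ball 0 1))
    (h : ∀ a ∈ ball (0 : E) 1, ‖g a‖ * ‖a‖ ^ 2 ≤ M) :
    ∃ M', ∀ a ∈ ball (0 : E) 1, ‖g a‖ ≤ M' := by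
  obtain ⟨M₀, hM₀⟩ := (isCompact_closedBall (0 : E) (1 / 2)).exists_bound_of_continuousOn
    (hg.mono (closedBall_subset_ball (by norm_num)))
  refine ⟨max M₀ (4 * M), fun a ha ↦ ?_⟩
  rcases le_total ‖a‖ (1 / 2) with h_center | h_rim
  · exact (hM₀ a (mem_closedBall_zero_iff.2 h_center)).trans (le_max_left _ _)
  · have h_sq : 1 / 4 ≤ ‖a‖ ^ 2 := by nlinarith
    have := mul_le_mul_of_nonneg_left h_sq (norm_nonneg (g a))
    exact le_max_of_le_right (by linarith [h a ha])

end Bloch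

theorem stmt10 (n : ℕ) (t β α : ℝ) (ht : 0 < t) (hα : -1 < α)
    (hβeq : β = 1 + ((n : ℝ) + 1 + α) / t) (g : Cn n → ℂ) (hg : Hol g)
    (C : ℝ) (hC : 0 < C)
    (hbdd : ∀ f : Cn n → ℂ, InBergman n t α f →
      InBloch n β (fun z => g z * f z) ∧
      ‖g 0 * f 0‖ + blochNorm n β (fun z => g z * f z) ≤ C * bNorm n t α f) :
    ∃ M, ∀ a ∈ B n, ‖g a‖ ≤ M := by
  subst hβeq
  have h_radial (k : ℕ) (hk : 2 * (n + 1 + α) ≤ k * t) : ∃ M, ∀ a ∈ B n,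
      ‖rderiv (fun z ↦ g z * ballPeak a z ^ k) a‖ * (1 - ‖a‖ ^ 2) ≤ M := by
    obtain ⟨K, hK⟩ := exists_bNorm_ballPeak_pow_le n ht hα hk
    refine ⟨C * K, fun a ha ↦ ?_⟩
    obtain ⟨h_mem, h_norm⟩ := hK a ha
    obtain ⟨h_bloch, h_le⟩ := hbdd _ h_mem
    refine h_bloch.norm_rderiv_mul_le_of_blochNorm_le ha ?_
    rw [mul_assoc]
    exact (le_of_add_le_of_nonneg_right h_le (norm_nonneg _)).trans (by gcongr)
  obtain ⟨k, hk⟩ := exists_nat_ge (2 * (n + 1 + α) / t)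
  rw [div_le_iff₀ ht] at hk
  obtain ⟨M₀, hM₀⟩ := h_radial k hk
  obtain ⟨M₁, hM₁⟩ := h_radial (k + 1) (hk.trans (by gcongr; simp))
  refine exists_norm_le_of_norm_mul_norm_sq_le (M := M₁ + M₀) hg.continuousOn fun a ha ↦ ?_
  have hga : DifferentiableAt ℂ g a := hg.differentiableAt (Metric.isOpen_ball.mem_nhds ha)
  exact (norm_mul_norm_sq_le_rderiv_mul_ballPeak_pow hga (mem_B_iff.1 ha) k).trans
    (add_le_add (hM₁ a ha) (hM₀ a ha))
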